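/- The density δ_k tends to infinity: the real sequence δ_k = ((p_1 − 1)/p_1) · ∏_{h=2}^{k−1} (p_h − 2)/p_h · (p_k − 2) tends to +∞ as k → ∞. -/

import Mathlib

/-- The `h`-th prime number (1-indexed): `nthPrime 1 = 2`, `nthPrime 2 = 3`, ... -/
noncomputable def nthPrime (h : ℕ) : ℕ := Nat.nth Nat.Prime (h - 1)

/-- `mK k = p_1 * p_2 * ⋯ * p_k`, the product of the first `k` primes. -/
noncomputable def mK (k : ℕ) : ℕ := ∏ h ∈ Finset.Icc 1 k, nthPrime h

/-- `cK k = (p_1 - 1) * (p_2 - 2) * ⋯ * (p_k - 2)`. -/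
noncomputable def cK (k : ℕ) : ℕ := (nthPrime 1 - 1) * ∏ h ∈ Finset.Icc 2 k, (nthPrime h - 2)

/-- A selection of level `k`: a family of sets of residues `S h ⊆ {0, …, p_h - 1}`
with `|S 1| = 1` and `|S h| = 2` for `2 ≤ h ≤ k`. -/
def IsSelection (k : ℕ) (S : ℕ → Finset ℕ) : Prop :=
  (∀ h, 1 ≤ h → h ≤ k → S h ⊆ Finset.range (nthPrime h)) ∧
    (S 1).card = 1 ∧ ∀ h, 2 ≤ h → h ≤ k → (S h).card = 2

/-- `n` is permitted for a selection of level `k` if for every `1 ≤ h ≤ k` the residue of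
`n` modulo `p_h` is not a selected remainder. -/
def Permitted (k : ℕ) (S : ℕ → Finset ℕ) (n : ℕ) : Prop :=
  ∀ h ∈ Finset.Icc 1 k, n % nthPrime h ∉ S h

noncomputable instance (k : ℕ) (S : ℕ → Finset ℕ) : DecidablePred (Permitted k S) := fun n =>
  inferInstanceAs (Decidable (∀ h ∈ Finset.Icc 1 k, n % nthPrime h ∉ S h))

/-- The density `δ_k = c_k · p_k / m_k` of permitted `k`-tuples within a period. -/
noncomputable def deltaK (k : ℕ) : ℝ := (cK k : ℝ) * nthPrime k / mK k

/-!
The ratio `δ_{k+1} / δ_k` is `(p_{k+1} - 2) / p_k`, which is at least `1` because consecutive odd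
primes differ by at least `2`. Twin primes give ratio exactly `1`, so a single step need not gain
anything. Primes above `3` are `±1` modulo `6`, however, so among three consecutive ones the outer
two differ by at least `6`, and this forces `δ_{k+2} ≥ δ_k (1 + 1 / p_k)`. Hence a bounded
`δ` would make `∑ 1 / p_k` converge.
-/

open Filter Finset

lemma sum_range_sub_shift {G : Type*} [AddCommGroup G] (u : ℕ → G) (m N : ℕ) :
    ∑ n ∈ range N, (u (n + m) - u n) = ∑ j ∈ range m, (u (N + j) - u j) := by
  have sum_eq : ∑ n ∈ range m, u n + ∑ n ∈ range N, u (m + n) =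
      ∑ n ∈ range N, u n + ∑ j ∈ range m, u (N + j) := by
    rw [← sum_range_add, ← sum_range_add, add_comm m N]
  simp only [sum_sub_distrib, add_comm _ m]
  rw [sub_eq_sub_iff_add_eq_add, add_comm, sum_eq, add_comm]

lemma sum_range_sub_shift_le {G : Type*} [AddCommGroup G] [PartialOrder G] [IsOrderedAddMonoid G]
    {u : ℕ → G} {M : G} (hu : Monotone u) (hM : ∀ n, u n ≤ M) (m N : ℕ) :
    ∑ n ∈ range N, (u (n + m) - u n) ≤ m • (M - u 0) :=
  calc ∑ n ∈ range N, (u (n + m) - u n)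
      = ∑ j ∈ range m, (u (N + j) - u j) := sum_range_sub_shift u m N
    _ ≤ ∑ _j ∈ range m, (M - u 0) :=
        sum_le_sum fun j _ ↦ sub_le_sub (hM _) (hu (Nat.zero_le j))
    _ = m • (M - u 0) := by rw [sum_const, card_range]

lemma tendsto_atTop_of_add_le_shift {u b : ℕ → ℝ} {m : ℕ} (hu : Monotone u) (hb : ∀ n, 0 ≤ b n)
    (hsum : ¬ Summable b) (hub : ∀ n, u n + b n ≤ u (n + m)) : Tendsto u atTop atTop := by
  refine tendsto_atTop_atTop_of_monotone' hu fun ⟨M, hM⟩ ↦ hsum ?_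
  refine summable_of_sum_range_le (c := m • (M - u 0)) hb fun N ↦ ?_
  calc ∑ n ∈ range N, b n
      ≤ ∑ n ∈ range N, (u (n + m) - u n) :=
        sum_le_sum fun n _ ↦ le_sub_iff_add_le'.2 (hub n)
    _ ≤ m • (M - u 0) := sum_range_sub_shift_le hu (fun n ↦ hM ⟨n, rfl⟩) m N

lemma prime_mod_six {p : ℕ} (hp : p.Prime) (h3 : 3 < p) : p % 6 = 1 ∨ p % 6 = 5 := by
  have not_two_dvd : ¬ 2 ∣ p := fun h ↦ by
    have := (Nat.prime_dvd_prime_iff_eq Nat.prime_two hp).1 h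
    omega
  have not_three_dvd : ¬ 3 ∣ p := fun h ↦ by
    have := (Nat.prime_dvd_prime_iff_eq Nat.prime_three hp).1 h
    omega
  omega

lemma prime_add_two_le {p q : ℕ} (hp : p.Prime) (hq : q.Prime) (h2 : 2 < p) (hpq : p < q) :
    p + 2 ≤ q := by
  have p_odd := hp.mod_two_eq_one_iff_ne_two.2 h2.ne'
  have q_odd := hq.mod_two_eq_one_iff_ne_two.2 (h2.trans hpq).ne'
  omega

lemma prime_add_six_le {p q r : ℕ} (hp : p.Prime) (hq : q.Prime) (hr : r.Prime) (h3 : 3 < p)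
    (hpq : p < q) (hqr : q < r) : p + 6 ≤ r := by
  have p_mod := prime_mod_six hp h3
  have q_mod := prime_mod_six hq (h3.trans hpq)
  have r_mod := prime_mod_six hr (h3.trans (hpq.trans hqr))
  omega

lemma prime_nthPrime (k : ℕ) : (nthPrime k).Prime := Nat.prime_nth_prime _

lemma nthPrime_count_add_one {p : ℕ} (hp : p.Prime) : nthPrime (p.count Nat.Prime + 1) = p :=
  Nat.nth_count hp

lemma nthPrime_strictMonoOn : StrictMonoOn nthPrime (Set.Ici 1) := fun _ hj _ _ hjk ↦
  Nat.nth_strictMono Nat.infinite_setOfPred_prime (Nat.sub_lt_sub_right hj hjk)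

lemma nthPrime_lt_succ {k : ℕ} (hk : 1 ≤ k) : nthPrime k < nthPrime (k + 1) :=
  nthPrime_strictMonoOn hk (Nat.le_add_left 1 k) k.lt_succ_self

lemma lt_nthPrime (k : ℕ) : k < nthPrime k := by
  have := Nat.add_two_le_nth_prime (k - 1)
  rw [nthPrime]
  omega

lemma not_summable_one_div_nthPrime : ¬ Summable fun k ↦ 1 / (nthPrime k : ℝ) := by
  intro h
  have count_injective : Function.Injective fun p : Nat.Primes ↦ Nat.count Nat.Prime p + 1 :=
    fun p q hpq ↦ Subtype.ext <| by
      rw [← nthPrime_count_add_one p.2, ← nthPrime_count_add_one q.2]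
      exact congrArg nthPrime hpq
  refine Nat.Primes.not_summable_one_div ((h.comp_injective count_injective).congr fun p ↦ ?_)
  simp only [Function.comp_apply, nthPrime_count_add_one p.2]

lemma mK_pos (k : ℕ) : 0 < mK k := prod_pos fun h _ ↦ (prime_nthPrime h).pos

lemma mK_succ (k : ℕ) : mK (k + 1) = mK k * nthPrime (k + 1) :=
  prod_Icc_succ_top (Nat.le_add_left 1 k) _

lemma cK_pos (k : ℕ) : 0 < cK k :=
  Nat.mul_pos (Nat.sub_pos_of_lt (prime_nthPrime 1).one_lt) <| prod_pos fun _ hh ↦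
    Nat.sub_pos_of_lt ((mem_Icc.1 hh).1.trans_lt (lt_nthPrime _))

lemma cK_succ {k : ℕ} (hk : 1 ≤ k) : cK (k + 1) = cK k * (nthPrime (k + 1) - 2) := by
  rw [cK, cK, prod_Icc_succ_top (Nat.succ_le_succ hk), mul_assoc]

lemma deltaK_pos (k : ℕ) : 0 < deltaK k := by
  have hc := cK_pos k
  have hm := mK_pos k
  have hp := (prime_nthPrime k).pos
  unfold deltaK
  positivity

lemma deltaK_succ {k : ℕ} (hk : 1 ≤ k) :
    deltaK (k + 1) = deltaK k * ((nthPrime (k + 1) - 2) / nthPrime k) := by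
  have hp : (nthPrime k : ℝ) ≠ 0 := mod_cast (prime_nthPrime k).ne_zero
  have hq : (nthPrime (k + 1) : ℝ) ≠ 0 := mod_cast (prime_nthPrime (k + 1)).ne_zero
  have hm : (mK k : ℝ) ≠ 0 := mod_cast (mK_pos k).ne'
  rw [deltaK, deltaK, mK_succ, cK_succ hk]
  push_cast [Nat.cast_sub (prime_nthPrime (k + 1)).two_le]
  field_simp

lemma deltaK_le_succ {k : ℕ} (hk : 2 ≤ k) : deltaK k ≤ deltaK (k + 1) := by
  have hp : (0 : ℝ) < nthPrime k := mod_cast (prime_nthPrime k).pos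
  have gap : (nthPrime k : ℝ) + 2 ≤ nthPrime (k + 1) :=
    mod_cast prime_add_two_le (prime_nthPrime k) (prime_nthPrime (k + 1))
      (hk.trans_lt (lt_nthPrime k)) (nthPrime_lt_succ (by omega))
  rw [deltaK_succ (by omega)]
  refine le_mul_of_one_le_right (deltaK_pos k).le ((one_le_div hp).2 ?_)
  linarith

lemma deltaK_monotoneOn : MonotoneOn deltaK (Set.Ici 2) :=
  monotoneOn_nat_Ici_of_le_succ fun _ ↦ deltaK_le_succ

lemma one_add_one_div_le_of_gaps {K : Type*} [Field K] [LinearOrder K] [IsStrictOrderedRing K]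
    {a b c : K} (ha : 2 ≤ a) (hb : a + 2 ≤ b) (hc : a + 6 ≤ c) :
    1 + 1 / a ≤ (b - 2) / a * ((c - 2) / b) := by
  have ha0 : 0 < a := by linarith
  have hb0 : 0 < b := by linarith
  have cleared : (a + 1) * b ≤ (b - 2) * (c - 2) :=
    calc (a + 1) * b ≤ (b - 2) * (a + 4) := by linarith
      _ ≤ (b - 2) * (c - 2) := by gcongr <;> linarith
  calc 1 + 1 / a = (a + 1) * b / (a * b) := by field_simp
    _ ≤ (b - 2) * (c - 2) / (a * b) := div_le_div_of_nonneg_right cleared (mul_pos ha0 hb0).le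
    _ = (b - 2) / a * ((c - 2) / b) := (div_mul_div_comm _ _ _ _).symm

lemma deltaK_mul_one_add_le {k : ℕ} (hk : 3 ≤ k) :
    deltaK k * (1 + 1 / nthPrime k) ≤ deltaK (k + 2) := by
  have hp := prime_nthPrime k
  have hq := prime_nthPrime (k + 1)
  have hr := prime_nthPrime (k + 2)
  have p_lt_q := nthPrime_lt_succ (k := k) (by omega)
  have q_lt_r := nthPrime_lt_succ (k := k + 1) (by omega)
  have three_lt_p := hk.trans_lt (lt_nthPrime k)
  have short_gap := prime_add_two_le hp hq (by omega) p_lt_q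
  have long_gap := prime_add_six_le hp hq hr three_lt_p p_lt_q q_lt_r
  rw [deltaK_succ (k := k + 1) (by omega), deltaK_succ (k := k) (by omega), mul_assoc]
  exact mul_le_mul_of_nonneg_left
    (one_add_one_div_le_of_gaps (mod_cast hp.two_le) (mod_cast short_gap) (mod_cast long_gap))
    (deltaK_pos k).le

/-- The density `δ_k = c_k · p_k / m_k` tends to `+∞` as `k → ∞`. -/
theorem deltaK_tendsto_atTop :
    Filter.Tendsto deltaK Filter.atTop Filter.atTop := by
  rw [← tendsto_add_atTop_iff_nat 3]
  have deltaK_mono : Monotone fun n ↦ deltaK (n + 3) := fun m n hmn ↦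
    deltaK_monotoneOn (Set.mem_Ici.2 (by omega)) (Set.mem_Ici.2 (by omega)) (by omega)
  have gain_not_summable : ¬ Summable fun n ↦ deltaK 3 * (1 / (nthPrime (n + 3) : ℝ)) := by
    rw [summable_mul_left_iff (deltaK_pos 3).ne',
      summable_nat_add_iff (f := fun k ↦ 1 / (nthPrime k : ℝ)) 3]
    exact not_summable_one_div_nthPrime
  refine tendsto_atTop_of_add_le_shift (m := 2) deltaK_mono
    (fun n ↦ mul_nonneg (deltaK_pos 3).le (by positivity)) gain_not_summable fun n ↦ ?_
  calc deltaK (n + 3) + deltaK 3 * (1 / nthPrime (n + 3))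
      ≤ deltaK (n + 3) + deltaK (n + 3) * (1 / nthPrime (n + 3)) := by
        gcongr
        simpa using deltaK_mono n.zero_le
    _ = deltaK (n + 3) * (1 + 1 / nthPrime (n + 3)) := by ring
    _ ≤ deltaK (n + 2 + 3) := deltaK_mul_one_add_le (Nat.le_add_left 3 n)
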